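/- arXiv:2307.00349 — 8 statements merged into one kernel-verified Lean document; each statement's English description precedes it below -/
import Mathlib

section
/- Let (Ω, F, P) be a probability space with filtration (F_t)_{t≥0}, let β ∈ (0,1), and let F: ℝ²_{>0} → ℝ_{>0} be a neoclassical production function that is twice continuously differentiable with F_{HX} > 0. Suppose there exists σ > 1 with liminf_{H→∞} σ_F(H,1) > σ. Let (A_{Ht})_{t≥0} and (A_{Xt})_{t≥0} be adapted processes of positive random variables satisfying E[ Σ_{t=1}^∞ (A_{Ht}/A_{Xt})^{1/σ−1} | F_0 ] < ∞ almost surely. Define the wage w_t = F_H(A_{Ht},A_{Xt}) A_{Ht}, the land rent r_t = F_X(A_{Ht},A_{Xt}) A_{Xt}, the land price P_t = β w_t, the stochastic discount factor m_{t→t+1} = β w_t/(β w_{t+1} + r_{t+1}) with m_{t→t+s} = Π_{j=0}^{s−1} m_{t+j→t+j+1}, and the fundamental value V_t = E[ Σ_{s=1}^∞ m_{t→t+s} r_{t+s} | F_t ]. Then for every t, P_t > V_t almost surely; that is, land is overvalued in equilibrium. -/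
open MeasureTheory Filter Topology

noncomputable section

/-- Partial derivative of `F` with respect to its first argument (labor `H`). -/
def dH (F : ℝ → ℝ → ℝ) (H X : ℝ) : ℝ := deriv (fun h => F h X) H

/-- Partial derivative of `F` with respect to its second argument (land `X`). -/
def dX (F : ℝ → ℝ → ℝ) (H X : ℝ) : ℝ := deriv (fun x => F H x) X

/-- Second-order cross partial derivative of `F`. -/
def dHX (F : ℝ → ℝ → ℝ) (H X : ℝ) : ℝ := deriv (fun x => dH F H x) X

/-- Elasticity of substitution `σ_F = F_H F_X / (F F_{HX})`. -/
def sigmaF (F : ℝ → ℝ → ℝ) (H X : ℝ) : ℝ :=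
  dH F H X * dX F H X / (F H X * dHX F H X)

/-- A neoclassical production function: positive on the positive quadrant, homogeneous of
degree one, concave, continuously differentiable, with positive partial derivatives. -/
structure Neoclassical (F : ℝ → ℝ → ℝ) : Prop where
  pos : ∀ ⦃H X : ℝ⦄, 0 < H → 0 < X → 0 < F H X
  homog : ∀ ⦃l H X : ℝ⦄, 0 < l → 0 < H → 0 < X → F (l * H) (l * X) = l * F H X
  concave : ConcaveOn ℝ {p : ℝ × ℝ | 0 < p.1 ∧ 0 < p.2} (fun p => F p.1 p.2)
  contDiff : ContDiffOn ℝ 1 (fun p : ℝ × ℝ => F p.1 p.2) {p : ℝ × ℝ | 0 < p.1 ∧ 0 < p.2}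
  dH_pos : ∀ ⦃H X : ℝ⦄, 0 < H → 0 < X → 0 < dH F H X
  dX_pos : ∀ ⦃H X : ℝ⦄, 0 < H → 0 < X → 0 < dX F H X

/-- `g` is a version of the conditional expectation of the nonnegative extended-real-valued
function `f` given the sub-σ-algebra `m0`: it is `m0`-measurable and has the same integral
as `f` on every `m0`-measurable set. -/
def IsCondExp {Ω : Type*} (m0 : MeasurableSpace Ω) {m : MeasurableSpace Ω}
    (μ : Measure Ω) (f g : Ω → ENNReal) : Prop :=
  Measurable[m0] g ∧ ∀ s : Set Ω, MeasurableSet[m0] s →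
    ∫⁻ ω in s, f ω ∂μ = ∫⁻ ω in s, g ω ∂μ

theorem aux_condExp_lt {Ω : Type*} {mΩ : MeasurableSpace Ω} (μ : Measure Ω)
    [IsProbabilityMeasure μ] (m0 : MeasurableSpace Ω) (hm0 : m0 ≤ mΩ) (f g p : Ω → ENNReal)
    (h : IsCondExp m0 μ f g) (hp : Measurable[m0] p) (hpt : ∀ ω, p ω < ⊤)
    (hfp : ∀ᵐ ω ∂μ, f ω < p ω) : ∀ᵐ ω ∂μ, g ω < p ω := by
  obtain ⟨hg, hint⟩ := h
  have key : ∀ n : ℕ, μ ({ω | p ω ≤ n} ∩ {ω | p ω ≤ g ω}) = 0 := by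
    intro n
    by_contra hne
    have hs : MeasurableSet[m0] ({ω | p ω ≤ n} ∩ {ω | p ω ≤ g ω}) :=
      MeasurableSet.inter (measurableSet_le hp measurable_const) (measurableSet_le hp hg)
    have hs' := hm0 _ hs
    have e := hint _ hs
    have hfin : ∫⁻ ω in ({ω | p ω ≤ n} ∩ {ω | p ω ≤ g ω}), p ω ∂μ < ⊤ :=
      setLIntegral_lt_top_of_le_nnreal (measure_ne_top _ _) ⟨n, fun x hx => by simpa using hx.1⟩
    have h1 : ∫⁻ ω in ({ω | p ω ≤ n} ∩ {ω | p ω ≤ g ω}), f ω ∂μ ≤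
        ∫⁻ ω in ({ω | p ω ≤ n} ∩ {ω | p ω ≤ g ω}), p ω ∂μ :=
      lintegral_mono_ae (ae_restrict_of_ae (hfp.mono fun _ h => h.le))
    have h2 := setLIntegral_strict_mono hs' hne (hp.mono hm0 le_rfl) (h1.trans_lt hfin).ne
      (hfp.mono fun x h _ => h)
    have h3 : ∫⁻ ω in ({ω | p ω ≤ n} ∩ {ω | p ω ≤ g ω}), p ω ∂μ ≤
        ∫⁻ ω in ({ω | p ω ≤ n} ∩ {ω | p ω ≤ g ω}), g ω ∂μ :=
      setLIntegral_mono (hg.mono hm0 le_rfl) (fun x hx => hx.2)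
    exact absurd (h2.trans_le h3) (by rw [e]; exact lt_irrefl _)
  have hall : ∀ᵐ ω ∂μ, ∀ n : ℕ, ¬ (p ω ≤ n ∧ p ω ≤ g ω) := by
    rw [ae_all_iff]
    intro n
    rw [ae_iff]
    simpa [Set.inter_def] using key n
  filter_upwards [hall] with ω hω
  obtain ⟨n, hn⟩ := ENNReal.exists_nat_gt (hpt ω).ne
  by_contra hc
  exact hω n ⟨hn.le, not_lt.mp hc⟩

theorem aux_condExp_fin {Ω : Type*} {mΩ : MeasurableSpace Ω} (μ : Measure Ω)
    [IsProbabilityMeasure μ] (m0 : MeasurableSpace Ω) (hm0 : m0 ≤ mΩ) (f g : Ω → ENNReal)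
    (h : IsCondExp m0 μ f g) (hf : Measurable[mΩ] f)
    (hgt : ∀ᵐ ω ∂μ, g ω < ⊤) : ∀ᵐ ω ∂μ, f ω < ⊤ := by
  obtain ⟨hg, hint⟩ := h
  have hall : ∀ᵐ ω ∂μ, ∀ n : ℕ, g ω ≤ n → f ω < ⊤ := by
    rw [ae_all_iff]
    intro n
    have hs : MeasurableSet[m0] {ω | g ω ≤ n} := measurableSet_le hg measurable_const
    have e := hint _ hs
    have hfin : ∫⁻ ω in {ω | g ω ≤ n}, g ω ∂μ < ⊤ :=
      setLIntegral_lt_top_of_le_nnreal (measure_ne_top _ _) ⟨n, fun x hx => by simpa using hx⟩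
    have := ae_lt_top (μ := μ.restrict {ω | g ω ≤ n}) hf (by rw [e]; exact hfin.ne)
    exact (ae_restrict_iff' (hm0 _ hs)).mp this
  filter_upwards [hall, hgt] with ω hω hg
  obtain ⟨n, hn⟩ := ENNReal.exists_nat_gt hg.ne
  exact hω n hn.le

theorem aux_phi_diff (F : ℝ → ℝ → ℝ)
    (hF2 : ContDiffOn ℝ 2 (fun p : ℝ × ℝ => F p.1 p.2) {p : ℝ × ℝ | 0 < p.1 ∧ 0 < p.2}) :
    ContDiffOn ℝ 2 (fun x => F x 1) (Set.Ioi 0) := by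
  have : ContDiffOn ℝ 2 (fun x : ℝ => ((x, 1) : ℝ × ℝ)) (Set.Ioi 0) := by fun_prop
  exact hF2.comp this (fun x hx => ⟨hx, one_pos⟩)

theorem aux_F_eq (F : ℝ → ℝ → ℝ) (hF : Neoclassical F) {H X : ℝ} (hH : 0 < H) (hX : 0 < X) :
    F H X = X * F (H / X) 1 := by
  rw [← hF.homog hX (div_pos hH hX) one_pos]
  congr 1 <;> field_simp

theorem aux_dphi (F : ℝ → ℝ → ℝ)
    (hF2 : ContDiffOn ℝ 2 (fun p : ℝ × ℝ => F p.1 p.2) {p : ℝ × ℝ | 0 < p.1 ∧ 0 < p.2})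
    {x : ℝ} (hx : 0 < x) :
    HasDerivAt (fun x => F x 1) (deriv (fun x => F x 1) x) x :=
  (((aux_phi_diff F hF2).differentiableOn (by norm_num)).differentiableAt
    (Ioi_mem_nhds hx)).hasDerivAt

theorem aux_ddphi (F : ℝ → ℝ → ℝ)
    (hF2 : ContDiffOn ℝ 2 (fun p : ℝ × ℝ => F p.1 p.2) {p : ℝ × ℝ | 0 < p.1 ∧ 0 < p.2})
    {x : ℝ} (hx : 0 < x) :
    HasDerivAt (deriv (fun x => F x 1)) (deriv (deriv (fun x => F x 1)) x) x := by
  have h := (aux_phi_diff F hF2).deriv_of_isOpen (m := 1) isOpen_Ioi (by norm_num)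
  exact ((h.differentiableOn (by norm_num)).differentiableAt (Ioi_mem_nhds hx)).hasDerivAt

theorem aux_dH (F : ℝ → ℝ → ℝ) (hF : Neoclassical F)
    (hF2 : ContDiffOn ℝ 2 (fun p : ℝ × ℝ => F p.1 p.2) {p : ℝ × ℝ | 0 < p.1 ∧ 0 < p.2})
    {H X : ℝ} (hH : 0 < H) (hX : 0 < X) : dH F H X = deriv (fun x => F x 1) (H / X) := by
  have e : (fun h => F h X) =ᶠ[𝓝 H] fun h => X * F (h / X) 1 := by
    filter_upwards [Ioi_mem_nhds hH] with h hh using aux_F_eq F hF hh hX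
  unfold dH
  rw [e.deriv_eq]
  have h1 : HasDerivAt (fun h : ℝ => h / X) (1 / X) H := (hasDerivAt_id H).div_const X
  have h2 := ((aux_dphi F hF2 (div_pos hH hX)).comp H h1).const_mul X
  have h3 := h2.deriv
  simp only [Function.comp_def] at h3
  rw [h3]
  field_simp

theorem aux_div (H : ℝ) {X : ℝ} (hX : 0 < X) :
    HasDerivAt (fun y : ℝ => H / y) (-H / X ^ 2) X := by
  have := (hasDerivAt_inv hX.ne').const_mul H
  simp only [div_eq_mul_inv] at *
  rw [show -H * (X ^ 2)⁻¹ = H * -(X ^ 2)⁻¹ by ring]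
  exact this

theorem aux_dX (F : ℝ → ℝ → ℝ) (hF : Neoclassical F)
    (hF2 : ContDiffOn ℝ 2 (fun p : ℝ × ℝ => F p.1 p.2) {p : ℝ × ℝ | 0 < p.1 ∧ 0 < p.2})
    {H X : ℝ} (hH : 0 < H) (hX : 0 < X) :
    dX F H X = F (H / X) 1 - H / X * deriv (fun x => F x 1) (H / X) := by
  have e : (fun y => F H y) =ᶠ[𝓝 X] fun y => y * F (H / y) 1 := by
    filter_upwards [Ioi_mem_nhds hX] with h hh using aux_F_eq F hF hH hh
  unfold dX
  rw [e.deriv_eq]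
  have h2 := (hasDerivAt_id X).mul ((aux_dphi F hF2 (div_pos hH hX)).comp X (aux_div H hX))
  have h3 : deriv (fun y => y * F (H / y) 1) X = _ := h2.deriv
  rw [h3]
  simp only [Function.comp_def, id]
  field_simp
  ring

theorem aux_dHX (F : ℝ → ℝ → ℝ) (hF : Neoclassical F)
    (hF2 : ContDiffOn ℝ 2 (fun p : ℝ × ℝ => F p.1 p.2) {p : ℝ × ℝ | 0 < p.1 ∧ 0 < p.2})
    {H : ℝ} (hH : 0 < H) :
    dHX F H 1 = - H * deriv (deriv (fun x => F x 1)) H := by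
  have e : (fun y => dH F H y) =ᶠ[𝓝 1] fun y => deriv (fun x => F x 1) (H / y) := by
    filter_upwards [Ioi_mem_nhds (zero_lt_one' ℝ)] with h hh using aux_dH F hF hF2 hH hh
  unfold dHX
  rw [e.deriv_eq]
  have h2 := (aux_ddphi F hF2 (div_pos hH one_pos)).comp 1 (aux_div H one_pos)
  have h3 : deriv (fun y => deriv (fun x => F x 1) (H / y)) 1 = _ := h2.deriv
  rw [h3]
  simp
  ring

theorem aux_bound (F : ℝ → ℝ → ℝ) (hF : Neoclassical F)
    (hF2 : ContDiffOn ℝ 2 (fun p : ℝ × ℝ => F p.1 p.2) {p : ℝ × ℝ | 0 < p.1 ∧ 0 < p.2})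
    (hFHX : ∀ ⦃H X : ℝ⦄, 0 < H → 0 < X → 0 < dHX F H X)
    (σ : ℝ) (hσ : 1 < σ)
    (hliminf : σ < atTop.liminf (fun H : ℝ => sigmaF F H 1)) :
    ∃ K C : ℝ, 0 < K ∧ 0 < C ∧ ∀ H X : ℝ, 0 < H → 0 < X → K ≤ H / X →
      dX F H X * X / (dH F H X * H) ≤ C * (H / X) ^ (1 / σ - 1) := by
  have hbd : IsBoundedUnder (· ≥ ·) atTop (fun H : ℝ => sigmaF F H 1) := by
    refine ⟨0, ?_⟩
    rw [eventually_map]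
    filter_upwards [eventually_gt_atTop 0] with H hH
    exact (div_pos (mul_pos (hF.dH_pos hH one_pos) (hF.dX_pos hH one_pos))
      (mul_pos (hF.pos hH one_pos) (hFHX hH one_pos))).le
  obtain ⟨K0, hK0⟩ := eventually_atTop.mp (eventually_lt_of_lt_liminf hliminf hbd)
  set φ : ℝ → ℝ := fun x => F x 1 with hφ
  set D : ℝ → ℝ := fun x => φ x - x * deriv φ x with hD
  have hDpos : ∀ x, 0 < x → 0 < D x := by
    intro x hx
    have := hF.dX_pos hx one_pos
    rw [aux_dX F hF hF2 hx one_pos, div_one] at this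
    exact this
  have hφ'pos : ∀ x, 0 < x → 0 < deriv φ x := by
    intro x hx
    have := hF.dH_pos hx one_pos
    rw [aux_dH F hF hF2 hx one_pos, div_one] at this
    exact this
  set L : ℝ → ℝ := fun x => Real.log (D x) - Real.log (deriv φ x) - (1 / σ) * Real.log x with hL
  have hLd : ∀ x, 0 < x → HasDerivAt L
      ((deriv φ x - (1 * deriv φ x + x * deriv (deriv φ) x)) / D x
        - deriv (deriv φ) x / deriv φ x - (1 / σ) * x⁻¹) x := by
    intro x hx
    have h1 := aux_dphi F hF2 hx
    have h2 := aux_ddphi F hF2 hx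
    have h3 : HasDerivAt D (deriv φ x - (1 * deriv φ x + x * deriv (deriv φ) x)) x :=
      h1.sub ((hasDerivAt_id x).mul h2)
    exact ((h3.log (hDpos x hx).ne').sub (h2.log (hφ'pos x hx).ne')).sub
      ((Real.hasDerivAt_log hx.ne').const_mul _)
  set K := max K0 1 with hK
  have hKpos : 0 < K := lt_of_lt_of_le one_pos (le_max_right _ _)
  have hanti : AntitoneOn L (Set.Ici K) := by
    refine antitoneOn_of_deriv_nonpos (convex_Ici K) ?_ ?_ ?_
    · intro x hx
      exact (hLd x (hKpos.trans_le hx)).continuousAt.continuousWithinAt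
    · intro x hx
      rw [interior_Ici] at hx
      exact (hLd x (hKpos.trans hx)).differentiableAt.differentiableWithinAt
    · intro x hx
      rw [interior_Ici] at hx
      have hx0 : 0 < x := hKpos.trans hx
      rw [(hLd x hx0).deriv]
      have hs := hK0 x ((le_max_left _ _).trans (le_of_lt hx))
      unfold sigmaF at hs
      have hq := hFHX hx0 one_pos
      rw [lt_div_iff₀ (mul_pos (hF.pos hx0 one_pos) hq), aux_dHX F hF hF2 hx0,
        aux_dH F hF hF2 hx0 one_pos, aux_dX F hF hF2 hx0 one_pos, div_one] at hs
      have hd := hDpos x hx0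
      have hp := hφ'pos x hx0
      have hDx : D x = φ x - x * deriv φ x := rfl
      change σ * (φ x * (-x * deriv (deriv φ) x)) < deriv φ x * (φ x - x * deriv φ x) at hs
      rw [← hDx] at hs
      have hφx : φ x = D x + x * deriv φ x := by rw [hDx]; ring
      have e : (deriv φ x - (1 * deriv φ x + x * deriv (deriv φ) x)) / D x
        - deriv (deriv φ) x / deriv φ x - (1 / σ) * x⁻¹
        = (σ * (φ x * (-x * deriv (deriv φ) x)) - deriv φ x * D x) /
          (σ * x * D x * deriv φ x) := by
        rw [hφx]
        have : σ ≠ 0 := by positivity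
        generalize D x = d at *
        generalize deriv φ x = p at *
        field_simp
        ring
      rw [e]
      exact div_nonpos_of_nonpos_of_nonneg (by linarith) (by positivity)
  refine ⟨K, Real.exp (L K), hKpos, Real.exp_pos _, ?_⟩
  intro H X hH hX hKx
  have hx0 : 0 < H / X := div_pos hH hX
  have h1 := hanti (Set.mem_Ici.mpr le_rfl) hKx hKx
  rw [aux_dH F hF hF2 hH hX, aux_dX F hF hF2 hH hX]
  change D (H / X) * X / (deriv φ (H / X) * H) ≤ _
  have e : D (H / X) * X / (deriv φ (H / X) * H) =
      Real.exp (L (H / X)) * (H / X) ^ (1 / σ - 1) := by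
    rw [Real.rpow_def_of_pos hx0, ← Real.exp_add]
    have : L (H / X) + Real.log (H / X) * (1 / σ - 1) =
      Real.log (D (H / X)) - Real.log (deriv φ (H / X)) - Real.log (H / X) := by
      simp only [hL]; ring
    rw [this, Real.exp_sub, Real.exp_sub, Real.exp_log (hDpos _ hx0),
      Real.exp_log (hφ'pos _ hx0), Real.exp_log hx0]
    have := (hφ'pos _ hx0).ne'
    field_simp
  rw [e]
  gcongr

theorem aux_path (β : ℝ) (w r P : ℕ → ℝ) (m : ℕ → ℕ → ℝ) (hβ : 0 < β)
    (hw : ∀ t, 0 < w t) (hr : ∀ t, 0 < r t) (hP : ∀ t, P t = β * w t)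
    (hm : ∀ t s, m t s =
      ∏ j ∈ Finset.range s, β * w (t + j) / (β * w (t + j + 1) + r (t + j + 1)))
    (hs : Summable fun t => r (t + 1) / w (t + 1)) (t : ℕ) :
    ∑' s : ℕ, ENNReal.ofReal (m t (s + 1) * r (t + s + 1)) < ENNReal.ofReal (P t) := by
  have hPpos : ∀ t, 0 < P t := fun t => by rw [hP]; exact mul_pos hβ (hw t)
  have hmpos : ∀ t s, 0 < m t s := fun t s => by
    rw [hm]
    refine Finset.prod_pos fun j _ => ?_
    have := hw (t + j); have := hw (t + j + 1); have := hr (t + j + 1)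
    positivity
  have hstep : ∀ n, m t (n + 1) * (P (t + n + 1) + r (t + n + 1)) = m t n * P (t + n) := by
    intro n
    rw [hm, Finset.prod_range_succ, ← hm, hP, hP]
    have := hw (t + n + 1); have := hr (t + n + 1)
    field_simp
  have hid : ∀ n, ∑ s ∈ Finset.range n, m t (s + 1) * r (t + s + 1) = P t - m t n * P (t + n) := by
    intro n
    induction n with
    | zero => simp [hm]
    | succ n ih =>
      rw [Finset.sum_range_succ, ih, ← hstep n]
      rw [← add_assoc]; ring
  have hs2 : Summable fun n => r (t + n + 1) / P (t + n + 1) := by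
    have h := ((summable_nat_add_iff t).mpr hs).mul_left β⁻¹
    refine h.congr fun n => ?_
    rw [hP, show n + t + 1 = t + n + 1 by ring]
    have := hw (t + n + 1)
    field_simp
  have hlow : ∀ n, P t * Real.exp (-∑ s ∈ Finset.range n, r (t + s + 1) / P (t + s + 1)) ≤
      m t n * P (t + n) := by
    intro n
    induction n with
    | zero => simp [hm]
    | succ n ih =>
      rw [Finset.sum_range_succ, neg_add, Real.exp_add, ← mul_assoc]
      have p1 := hPpos (t + n + 1)
      have r1 := hr (t + n + 1)
      have h1 : Real.exp (-(r (t + n + 1) / P (t + n + 1))) ≤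
          P (t + n + 1) / (P (t + n + 1) + r (t + n + 1)) := by
        rw [Real.exp_neg, show P (t + n + 1) / (P (t + n + 1) + r (t + n + 1)) =
          (r (t + n + 1) / P (t + n + 1) + 1)⁻¹ by field_simp; ring]
        exact inv_anti₀ (by positivity) (Real.add_one_le_exp _)
      calc _ ≤ (m t n * P (t + n)) * (P (t + n + 1) / (P (t + n + 1) + r (t + n + 1))) :=
            mul_le_mul ih h1 (Real.exp_pos _).le (mul_pos (hmpos _ _) (hPpos _)).le
        _ = m t (n + 1) * P (t + (n + 1)) := by
            rw [← hstep n, ← add_assoc]; field_simp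
  set S := ∑' n, r (t + n + 1) / P (t + n + 1)
  have hle : ∑' s : ℕ, ENNReal.ofReal (m t (s + 1) * r (t + s + 1)) ≤
      ENNReal.ofReal (P t - P t * Real.exp (-S)) := by
    refine ENNReal.tsum_le_of_sum_range_le fun n => ?_
    rw [← ENNReal.ofReal_sum_of_nonneg fun s _ => (mul_pos (hmpos _ _) (hr _)).le, hid]
    apply ENNReal.ofReal_le_ofReal
    have h1 : ∑ s ∈ Finset.range n, r (t + s + 1) / P (t + s + 1) ≤ S :=
      hs2.sum_le_tsum _ fun s _ => (div_pos (hr _) (hPpos _)).le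
    have h2 : P t * Real.exp (-S) ≤
      P t * Real.exp (-∑ s ∈ Finset.range n, r (t + s + 1) / P (t + s + 1)) :=
      mul_le_mul_of_nonneg_left (Real.exp_le_exp.mpr (neg_le_neg h1)) (hPpos t).le
    linarith [hlow n]
  refine hle.trans_lt ((ENNReal.ofReal_lt_ofReal_iff (hPpos t)).mpr ?_)
  linarith [mul_pos (hPpos t) (Real.exp_pos (-S))]

/-- **Land Overvaluation Theorem.** In the stochastic OLG economy with log utility,
a neoclassical production function whose elasticity of substitution exceeds `σ > 1` at
high input levels, and productivities satisfying the summability condition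
`E[∑_{t≥1} (A_{Ht}/A_{Xt})^{1/σ-1} | F_0] < ∞` a.s., the equilibrium land price
`P_t = β w_t` strictly exceeds the fundamental value
`V_t = E[∑_{s≥1} m_{t→t+s} r_{t+s} | F_t]` almost surely, for every `t`. -/
theorem land_overvaluation
    {Ω : Type*} {mΩ : MeasurableSpace Ω} (μ : Measure Ω) [IsProbabilityMeasure μ]
    (ℱ : Filtration ℕ mΩ)
    (β : ℝ) (hβ : β ∈ Set.Ioo (0 : ℝ) 1)
    (F : ℝ → ℝ → ℝ) (hF : Neoclassical F)
    (hF2 : ContDiffOn ℝ 2 (fun p : ℝ × ℝ => F p.1 p.2) {p : ℝ × ℝ | 0 < p.1 ∧ 0 < p.2})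
    (hFHX : ∀ ⦃H X : ℝ⦄, 0 < H → 0 < X → 0 < dHX F H X)
    (σ : ℝ) (hσ : 1 < σ)
    (hliminf : σ < atTop.liminf (fun H : ℝ => sigmaF F H 1))
    (AH AX : ℕ → Ω → ℝ)
    (hAH_adapted : Adapted ℱ AH) (hAX_adapted : Adapted ℱ AX)
    (hAH_pos : ∀ t ω, 0 < AH t ω) (hAX_pos : ∀ t ω, 0 < AX t ω)
    (hsum : ∃ g : Ω → ENNReal,
      IsCondExp (ℱ 0) μ
        (fun ω => ∑' t : ℕ, ENNReal.ofReal ((AH (t + 1) ω / AX (t + 1) ω) ^ (1 / σ - 1))) g ∧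
      ∀ᵐ ω ∂μ, g ω < ⊤)
    (w r P : ℕ → Ω → ℝ) (m : ℕ → ℕ → Ω → ℝ)
    (hw : ∀ t ω, w t ω = dH F (AH t ω) (AX t ω) * AH t ω)
    (hr : ∀ t ω, r t ω = dX F (AH t ω) (AX t ω) * AX t ω)
    (hP : ∀ t ω, P t ω = β * w t ω)
    (hm : ∀ t s ω, m t s ω =
      ∏ j ∈ Finset.range s, β * w (t + j) ω / (β * w (t + j + 1) ω + r (t + j + 1) ω)) :
    ∀ t : ℕ, ∀ V : Ω → ENNReal,
      IsCondExp (ℱ t) μ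
        (fun ω => ∑' s : ℕ, ENNReal.ofReal (m t (s + 1) ω * r (t + s + 1) ω)) V →
      ∀ᵐ ω ∂μ, V ω < ENNReal.ofReal (P t ω) := by
  obtain ⟨g, hg, hgt⟩ := hsum
  obtain ⟨K, C, hK, hC, hb⟩ := aux_bound F hF hF2 hFHX σ hσ hliminf
  have mH : ∀ t, Measurable (AH t) := fun t => (hAH_adapted t).mono (ℱ.le t) le_rfl
  have mX : ∀ t, Measurable (AX t) := fun t => (hAX_adapted t).mono (ℱ.le t) le_rfl
  have hfin := aux_condExp_fin μ (ℱ 0) (ℱ.le 0) _ g hg (Measurable.ennreal_tsum fun t =>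
    (Measurable.pow_const (f := fun ω => AH (t + 1) ω / AX (t + 1) ω)
      ((mH (t + 1)).div (mX (t + 1))) (1 / σ - 1)).ennreal_ofReal) hgt
  intro t V hV
  refine aux_condExp_lt μ (ℱ t) (ℱ.le t) _ V (fun ω => ENNReal.ofReal (P t ω)) hV ?_
    (fun ω => ENNReal.ofReal_lt_top) ?_
  · have e : P t = fun ω => β * (deriv (fun x => F x 1) (AH t ω / AX t ω) * AH t ω) := by
      funext ω
      rw [hP, hw, aux_dH F hF hF2 (hAH_pos t ω) (hAX_pos t ω)]
    rw [e]
    have h1 := hAH_adapted t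
    have h2 := hAX_adapted t
    exact ((((measurable_deriv _).comp (h1.div h2)).mul h1).const_mul β).ennreal_ofReal
  · filter_upwards [hfin] with ω hω
    have hwpos : ∀ t, 0 < w t ω := fun t => by
      rw [hw]; exact mul_pos (hF.dH_pos (hAH_pos t ω) (hAX_pos t ω)) (hAH_pos t ω)
    have hrpos : ∀ t, 0 < r t ω := fun t => by
      rw [hr]; exact mul_pos (hF.dX_pos (hAH_pos t ω) (hAX_pos t ω)) (hAX_pos t ω)
    refine aux_path β (fun t => w t ω) (fun t => r t ω) (fun t => P t ω) (fun t s => m t s ω)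
      hβ.1 hwpos hrpos (fun t => hP t ω) (fun t s => hm t s ω) ?_ t
    have hx : ∀ t, 0 < AH t ω / AX t ω := fun t => div_pos (hAH_pos t ω) (hAX_pos t ω)
    have hsm : Summable fun t : ℕ => (AH (t + 1) ω / AX (t + 1) ω) ^ (1 / σ - 1) := by
      have h := ENNReal.summable_toReal hω.ne
      refine h.congr fun t => ?_
      rw [ENNReal.toReal_ofReal (Real.rpow_nonneg (hx _).le _)]
    have hneg : 1 / σ - 1 < 0 := by
      have : 1 / σ < 1 := by rw [div_lt_one (by linarith)]; exact hσ
      linarith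
    have hev : ∀ᶠ t : ℕ in atTop, K ≤ AH (t + 1) ω / AX (t + 1) ω := by
      filter_upwards [hsm.tendsto_atTop_zero.eventually
        (gt_mem_nhds (Real.rpow_pos_of_pos hK (1 / σ - 1)))] with t ht
      exact ((Real.rpow_lt_rpow_iff_of_neg (hx _) hK hneg).mp ht).le
    refine Summable.of_norm_bounded_eventually_nat (hsm.mul_left C) ?_
    filter_upwards [hev] with t ht
    rw [Real.norm_of_nonneg (div_pos (hrpos _) (hwpos _)).le, hw, hr]
    exact hb _ _ (hAH_pos _ _) (hAX_pos _ _) ht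
end
end

section
/- Let F: ℝ²_{>0} → ℝ_{>0} be a twice continuously differentiable neoclassical production function with F_{HX} > 0, let A > 0 and σ > 0 be such that σ_F(H,1) ≥ σ for all H ≥ A, and set ρ = 1/σ. Then for all A_H, A_X > 0 with A_H/A_X ≥ A, we have F_X(A_H,A_X)/F_H(A_H,A_X) ≤ ( F_X(A,1)/F_H(A,1) ) · A^{−ρ} · (A_H/A_X)^ρ. -/
noncomputable section

theorem mrb_f {F : ℝ → ℝ → ℝ} (hF : Neoclassical F) {H X : ℝ} (hH : 0 < H) (hX : 0 < X) :
    F H X = X * F (H / X) 1 := by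
  have := hF.homog hX (div_pos hH hX) one_pos
  rwa [mul_one, mul_div_cancel₀ _ hX.ne'] at this

theorem mrb_smooth {F : ℝ → ℝ → ℝ}
    (hF2 : ContDiffOn ℝ 2 (fun p : ℝ × ℝ => F p.1 p.2) {p : ℝ × ℝ | 0 < p.1 ∧ 0 < p.2}) :
    ContDiffOn ℝ 2 (fun h => F h 1) (Set.Ioi 0) := by
  have h1 : ContDiffOn ℝ 2 (fun h : ℝ => (h, (1 : ℝ))) (Set.Ioi 0) := by fun_prop
  exact hF2.comp h1 (fun h hh => ⟨hh, one_pos⟩)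

theorem mrb_d1 {F : ℝ → ℝ → ℝ}
    (hF2 : ContDiffOn ℝ 2 (fun p : ℝ × ℝ => F p.1 p.2) {p : ℝ × ℝ | 0 < p.1 ∧ 0 < p.2})
    {h : ℝ} (hh : 0 < h) : HasDerivAt (fun h => F h 1) (dH F h 1) h := by
  have h1 := (mrb_smooth hF2).contDiffAt (Ioi_mem_nhds hh)
  exact (h1.differentiableAt (by norm_num)).hasDerivAt

theorem mrb_d2 {F : ℝ → ℝ → ℝ}
    (hF2 : ContDiffOn ℝ 2 (fun p : ℝ × ℝ => F p.1 p.2) {p : ℝ × ℝ | 0 < p.1 ∧ 0 < p.2})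
    {h : ℝ} (hh : 0 < h) :
    HasDerivAt (fun h => dH F h 1) (deriv (fun h => dH F h 1) h) h := by
  have h1 : ContDiffOn ℝ 1 (deriv (fun h => F h 1)) (Set.Ioi 0) :=
    (mrb_smooth hF2).deriv_of_isOpen isOpen_Ioi (by norm_num)
  have h2 := (h1.contDiffAt (Ioi_mem_nhds hh)).differentiableAt (by norm_num)
  exact h2.hasDerivAt

theorem mrb_dH {F : ℝ → ℝ → ℝ} (hF : Neoclassical F)
    (hF2 : ContDiffOn ℝ 2 (fun p : ℝ × ℝ => F p.1 p.2) {p : ℝ × ℝ | 0 < p.1 ∧ 0 < p.2})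
    {H X : ℝ} (hH : 0 < H) (hX : 0 < X) : dH F H X = dH F (H / X) 1 := by
  have h1 : (fun h => F h X) =ᶠ[nhds H] fun h => X * F (h / X) 1 := by
    filter_upwards [Ioi_mem_nhds hH] with h hh
    exact mrb_f hF hh hX
  have h2 : HasDerivAt (fun h => F (h / X) 1) (dH F (H / X) 1 * (1 / X)) H :=
    HasDerivAt.comp (h₂ := fun h => F h 1) H (mrb_d1 hF2 (div_pos hH hX))
      ((hasDerivAt_id H).div_const X)
  have h3 := ((h2.const_mul X).congr_of_eventuallyEq h1).deriv
  unfold dH at h3 ⊢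
  rw [h3]
  field_simp

theorem mrb_inv {H X : ℝ} (hX : 0 < X) :
    HasDerivAt (fun x : ℝ => H / x) (-(H / X ^ 2)) X := by
  have := (hasDerivAt_inv hX.ne').const_mul H
  have e : -(H / X ^ 2) = H * -(X ^ 2)⁻¹ := by ring
  rw [e]
  exact this

theorem mrb_dX {F : ℝ → ℝ → ℝ} (hF : Neoclassical F)
    (hF2 : ContDiffOn ℝ 2 (fun p : ℝ × ℝ => F p.1 p.2) {p : ℝ × ℝ | 0 < p.1 ∧ 0 < p.2})
    {H X : ℝ} (hH : 0 < H) (hX : 0 < X) :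
    dX F H X = F (H / X) 1 - H / X * dH F (H / X) 1 := by
  have h1 : (fun x => F H x) =ᶠ[nhds X] fun x => x * F (H / x) 1 := by
    filter_upwards [Ioi_mem_nhds hX] with x hx
    exact mrb_f hF hH hx
  have h2 : HasDerivAt (fun x => F (H / x) 1) (dH F (H / X) 1 * (-(H / X ^ 2))) X :=
    HasDerivAt.comp (h₂ := fun h => F h 1) X (mrb_d1 hF2 (div_pos hH hX)) (mrb_inv hX)
  have h3 := (((hasDerivAt_id X).mul h2).congr_of_eventuallyEq h1).deriv
  unfold dX
  rw [h3]
  simp only [id]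
  field_simp
  ring

theorem mrb_dHX {F : ℝ → ℝ → ℝ} (hF : Neoclassical F)
    (hF2 : ContDiffOn ℝ 2 (fun p : ℝ × ℝ => F p.1 p.2) {p : ℝ × ℝ | 0 < p.1 ∧ 0 < p.2})
    {H : ℝ} (hH : 0 < H) :
    dHX F H 1 = - (H * deriv (fun h => dH F h 1) H) := by
  have h1 : (fun x => dH F H x) =ᶠ[nhds 1] fun x => dH F (H / x) 1 := by
    filter_upwards [Ioi_mem_nhds (zero_lt_one (α := ℝ))] with x hx
    exact mrb_dH hF hF2 hH hx
  have h2 : HasDerivAt (fun x => dH F (H / x) 1)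
      (deriv (fun h => dH F h 1) (H / 1) * (-(H / 1 ^ 2))) 1 :=
    HasDerivAt.comp (h₂ := fun h => dH F h 1) 1 (mrb_d2 hF2 (div_pos hH one_pos))
      (mrb_inv one_pos)
  have h3 := (h2.congr_of_eventuallyEq h1).deriv
  unfold dHX
  rw [h3]
  simp only [div_one, one_pow]
  ring

/-- If the elasticity of substitution satisfies `σ_F(H,1) ≥ σ` for all `H ≥ A`, then for all
`A_H, A_X > 0` with `A_H/A_X ≥ A` (setting `ρ = 1/σ`),
`F_X(A_H,A_X)/F_H(A_H,A_X) ≤ (F_X(A,1)/F_H(A,1)) A^{-ρ} (A_H/A_X)^ρ`. -/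
theorem marginal_rate_bound
    (F : ℝ → ℝ → ℝ) (hF : Neoclassical F)
    (hF2 : ContDiffOn ℝ 2 (fun p : ℝ × ℝ => F p.1 p.2) {p : ℝ × ℝ | 0 < p.1 ∧ 0 < p.2})
    (hFHX : ∀ ⦃H X : ℝ⦄, 0 < H → 0 < X → 0 < dHX F H X)
    (A σ : ℝ) (hA : 0 < A) (hσ : 0 < σ)
    (hES : ∀ H : ℝ, A ≤ H → σ ≤ sigmaF F H 1) :
    ∀ AH AX : ℝ, 0 < AH → 0 < AX → A ≤ AH / AX →
      dX F AH AX / dH F AH AX ≤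
        dX F A 1 / dH F A 1 * A ^ (-(1 / σ)) * (AH / AX) ^ (1 / σ) := by
  have key : AntitoneOn (fun h => (F h 1 / dH F h 1 - h) * h ^ (-(1 / σ))) (Set.Ici A) := by
    have hd : ∀ h, A ≤ h → HasDerivAt (fun h => (F h 1 / dH F h 1 - h) * h ^ (-(1 / σ)))
        (((dH F h 1 * dH F h 1 - F h 1 * deriv (fun h => dH F h 1) h) / dH F h 1 ^ 2 - 1)
          * h ^ (-(1 / σ)) + (F h 1 / dH F h 1 - h) * (-(1 / σ) * h ^ (-(1 / σ) - 1))) h := by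
      intro h hh
      have h0 : 0 < h := hA.trans_le hh
      exact (((mrb_d1 hF2 h0).div (mrb_d2 hF2 h0) (hF.dH_pos h0 one_pos).ne').sub
        (hasDerivAt_id h)).mul (Real.hasDerivAt_rpow_const (Or.inl h0.ne'))
    refine antitoneOn_of_deriv_nonpos (convex_Ici A)
      (fun h hh => (hd h hh).continuousAt.continuousWithinAt)
      (fun h hh => (hd h (interior_subset hh)).differentiableAt.differentiableWithinAt) ?_
    intro h hh
    have hh : A ≤ h := interior_subset hh
    have h0 : 0 < h := hA.trans_le hh
    rw [(hd h hh).deriv, Real.rpow_sub h0, Real.rpow_one]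
    have e1 := hES h hh
    have e2 := mrb_dHX hF hF2 h0
    have e3 := mrb_dX hF hF2 h0 one_pos
    have p1 := hF.pos h0 one_pos
    have p2 := hF.dH_pos h0 one_pos
    have p3 := hFHX h0 one_pos
    rw [sigmaF, le_div_iff₀ (mul_pos p1 p3), e2, e3, div_one] at e1
    generalize deriv (fun h => dH F h 1) h = d at *
    generalize dH F h 1 = a at *
    generalize F h 1 = f at *
    have p4 : 0 < h ^ (-(1 / σ)) := Real.rpow_pos_of_pos h0 _
    generalize h ^ (-(1 / σ)) = r at *
    have : ((a * a - f * d) / a ^ 2 - 1) * r + (f / a - h) * (-(1 / σ) * (r / h))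
        = -(r / (a ^ 2 * σ * h)) * (a * (f - h * a) - σ * (f * -(h * d))) := by
      field_simp
      ring
    rw [this]
    exact mul_nonpos_of_nonpos_of_nonneg (neg_nonpos.2 (by positivity)) (sub_nonneg.2 e1)
  intro AH AX hH hX hle
  have h0 : 0 < AH / AX := div_pos hH hX
  have k := key (Set.mem_Ici.2 le_rfl) (Set.mem_Ici.2 hle) hle
  simp only at k
  rw [mrb_dX hF hF2 hH hX, mrb_dH hF hF2 hH hX, mrb_dX hF hF2 hA one_pos, div_one]
  have p1 := (hF.dH_pos h0 one_pos).ne'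
  have p2 := (hF.dH_pos hA one_pos).ne'
  rw [sub_div, sub_div, mul_div_cancel_right₀ _ p1, mul_div_cancel_right₀ _ p2]
  have p4 : 0 < (AH / AX) ^ (1 / σ) := Real.rpow_pos_of_pos h0 _
  rw [Real.rpow_neg h0.le, ← div_eq_mul_inv, div_le_iff₀ p4] at k
  exact k
end
end

section
/- Let α ∈ (0,1), ρ > 1, and G_H > G_X > 0. For each integer t ≥ 0 define w_t = α (α G_H^{(1−ρ)t} + (1−α) G_X^{(1−ρ)t})^{ρ/(1−ρ)} G_H^{(1−ρ)t} and r_t = (1−α)(α G_H^{(1−ρ)t} + (1−α) G_X^{(1−ρ)t})^{ρ/(1−ρ)} G_X^{(1−ρ)t}. Then w_t / ( α (1−α)^{ρ/(1−ρ)} G_H^{(1−ρ)t} G_X^{ρt} ) → 1 and r_t / ( (1−α)^{1/(1−ρ)} G_X^t ) → 1 as t → ∞. -/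
open Filter Topology

/-- Asymptotics of the CES equilibrium wage and land rent under unbalanced exponential
growth with elasticity of substitution `1/ρ < 1`:
`w_t ~ α (1-α)^{ρ/(1-ρ)} G_H^{(1-ρ)t} G_X^{ρt}` and `r_t ~ (1-α)^{1/(1-ρ)} G_X^t`. -/
theorem ces_wage_rent_asymptotics
    (α ρ GH GX : ℝ) (hα : α ∈ Set.Ioo (0 : ℝ) 1) (hρ : 1 < ρ)
    (hGX : 0 < GX) (hGHGX : GX < GH)
    (w r : ℕ → ℝ)
    (hw : ∀ t : ℕ, w t =
      α * (α * GH ^ ((1 - ρ) * (t : ℝ)) + (1 - α) * GX ^ ((1 - ρ) * (t : ℝ)))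
        ^ (ρ / (1 - ρ)) * GH ^ ((1 - ρ) * (t : ℝ)))
    (hr : ∀ t : ℕ, r t =
      (1 - α) * (α * GH ^ ((1 - ρ) * (t : ℝ)) + (1 - α) * GX ^ ((1 - ρ) * (t : ℝ)))
        ^ (ρ / (1 - ρ)) * GX ^ ((1 - ρ) * (t : ℝ))) :
    Tendsto (fun t : ℕ =>
        w t / (α * (1 - α) ^ (ρ / (1 - ρ)) * GH ^ ((1 - ρ) * (t : ℝ)) * GX ^ (ρ * (t : ℝ))))
      atTop (𝓝 1) ∧
    Tendsto (fun t : ℕ => r t / ((1 - α) ^ (1 / (1 - ρ)) * GX ^ (t : ℝ))) atTop (𝓝 1) := by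
  obtain ⟨h0, h1⟩ := hα
  have h1' : 0 < 1 - α := by linarith
  have hGH : 0 < GH := hGX.trans hGHGX
  have hne : 1 - ρ ≠ 0 := by linarith
  set p := ρ / (1 - ρ) with hp
  set q := (GH / GX) ^ (1 - ρ) with hq
  have hq0 : 0 < q := Real.rpow_pos_of_pos (div_pos hGH hGX) _
  have hq1 : q < 1 :=
    Real.rpow_lt_one_of_one_lt_of_neg ((one_lt_div hGX).2 hGHGX) (by linarith)
  have hlim : Tendsto (fun t : ℕ => (α / (1 - α) * q ^ t + 1) ^ p) atTop (𝓝 1) := by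
    have h := ((tendsto_pow_atTop_nhds_zero_of_lt_one hq0.le hq1).const_mul
      (α / (1 - α))).add_const 1
    have h2 := h.rpow_const (p := p) (Or.inl (by norm_num))
    simpa using h2
  have key : ∀ t : ℕ, (α * GH ^ ((1 - ρ) * (t : ℝ)) + (1 - α) * GX ^ ((1 - ρ) * (t : ℝ))) ^ p
      = (1 - α) ^ p * GX ^ (ρ * (t : ℝ)) * (α / (1 - α) * q ^ t + 1) ^ p := by
    intro t
    have hB : 0 < GX ^ ((1 - ρ) * (t : ℝ)) := Real.rpow_pos_of_pos hGX _
    have hqt : q ^ t = GH ^ ((1 - ρ) * (t : ℝ)) / GX ^ ((1 - ρ) * (t : ℝ)) := by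
      rw [hq, ← Real.rpow_natCast, ← Real.rpow_mul (div_pos hGH hGX).le,
        Real.div_rpow hGH.le hGX.le]
    have hS : 0 < α / (1 - α) * q ^ t + 1 := by positivity
    have e : α * GH ^ ((1 - ρ) * (t : ℝ)) + (1 - α) * GX ^ ((1 - ρ) * (t : ℝ))
        = (1 - α) * GX ^ ((1 - ρ) * (t : ℝ)) * (α / (1 - α) * q ^ t + 1) := by
      rw [hqt]; field_simp
    rw [e, Real.mul_rpow (by positivity) hS.le, Real.mul_rpow h1'.le hB.le,
      ← Real.rpow_mul hGX.le]
    congr 3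
    rw [hp]; field_simp
  constructor
  · refine hlim.congr fun t => ?_
    rw [hw, key]
    have a1 : 0 < GH ^ ((1 - ρ) * (t : ℝ)) := Real.rpow_pos_of_pos hGH _
    have a2 : 0 < GX ^ (ρ * (t : ℝ)) := Real.rpow_pos_of_pos hGX _
    have a3 : 0 < (1 - α) ^ p := Real.rpow_pos_of_pos h1' _
    generalize (α / (1 - α) * q ^ t + 1) ^ p = S
    field_simp
  · refine hlim.congr fun t => ?_
    rw [hr, key]
    have e1 : (1 - α) ^ (1 / (1 - ρ)) = (1 - α) * (1 - α) ^ p := by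
      have : 1 / (1 - ρ) = 1 + p := by rw [hp]; field_simp; ring
      rw [this, Real.rpow_add h1', Real.rpow_one]
    have e2 : GX ^ (t : ℝ) = GX ^ (ρ * (t : ℝ)) * GX ^ ((1 - ρ) * (t : ℝ)) := by
      rw [← Real.rpow_add hGX]; congr 1; ring
    rw [e1, e2]
    have a1 : 0 < GX ^ ((1 - ρ) * (t : ℝ)) := Real.rpow_pos_of_pos hGX _
    have a2 : 0 < GX ^ (ρ * (t : ℝ)) := Real.rpow_pos_of_pos hGX _
    have a3 : 0 < (1 - α) ^ p := Real.rpow_pos_of_pos h1' _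
    generalize (α / (1 - α) * q ^ t + 1) ^ p = S
    generalize GX ^ ((1 - ρ) * (t : ℝ)) = A at *
    generalize GX ^ (ρ * (t : ℝ)) = B at *
    generalize (1 - α) ^ p = C at *
    field_simp
end

section
/- Let α ∈ (0,1), β ∈ (0,1), ρ > 1, and G_H > G_X > 0. For each integer t ≥ 0 define w_t = α (α G_H^{(1−ρ)t} + (1−α) G_X^{(1−ρ)t})^{ρ/(1−ρ)} G_H^{(1−ρ)t} and r_t = (1−α)(α G_H^{(1−ρ)t} + (1−α) G_X^{(1−ρ)t})^{ρ/(1−ρ)} G_X^{(1−ρ)t}, and the gross risk-free rate R_t = (β w_t + r_t)/(β w_{t−1}) for t ≥ 1. Then R_t → ∞ as t → ∞. -/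
open Filter Topology

/-- With CES production with elasticity of substitution `1/ρ < 1` and unbalanced exponential
growth `G_H > G_X`, the gross risk-free rate `R_t = (β w_t + r_t)/(β w_{t-1})` diverges to
infinity. -/
theorem ces_interest_rate_diverges
    (α β ρ GH GX : ℝ) (hα : α ∈ Set.Ioo (0 : ℝ) 1) (hβ : β ∈ Set.Ioo (0 : ℝ) 1)
    (hρ : 1 < ρ) (hGX : 0 < GX) (hGHGX : GX < GH)
    (w r : ℕ → ℝ) (R : ℕ → ℝ)
    (hw : ∀ t : ℕ, w t =
      α * (α * GH ^ ((1 - ρ) * (t : ℝ)) + (1 - α) * GX ^ ((1 - ρ) * (t : ℝ)))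
        ^ (ρ / (1 - ρ)) * GH ^ ((1 - ρ) * (t : ℝ)))
    (hr : ∀ t : ℕ, r t =
      (1 - α) * (α * GH ^ ((1 - ρ) * (t : ℝ)) + (1 - α) * GX ^ ((1 - ρ) * (t : ℝ)))
        ^ (ρ / (1 - ρ)) * GX ^ ((1 - ρ) * (t : ℝ)))
    (hR : ∀ t : ℕ, 1 ≤ t → R t = (β * w t + r t) / (β * w (t - 1))) :
    Tendsto R atTop atTop := by
  obtain ⟨hα0, hα1⟩ := hα
  obtain ⟨hβ0, hβ1⟩ := hβ
  have hGH : 0 < GH := hGX.trans hGHGX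
  have hα2 : 0 < 1 - α := by linarith
  simp only [Real.rpow_mul hGH.le, Real.rpow_mul hGX.le, Real.rpow_natCast] at hw hr
  have ha : 0 < GH ^ (1 - ρ) := Real.rpow_pos_of_pos hGH _
  have hb : 0 < GX ^ (1 - ρ) := Real.rpow_pos_of_pos hGX _
  have hab : GH ^ (1 - ρ) < GX ^ (1 - ρ) :=
    Real.rpow_lt_rpow_of_neg hGX hGHGX (by linarith)
  have hk : ρ / (1 - ρ) ≤ 0 := div_nonpos_of_nonneg_of_nonpos (by linarith) (by linarith)
  generalize GH ^ (1 - ρ) = a at *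
  generalize GX ^ (1 - ρ) = b at *
  generalize ρ / (1 - ρ) = k at *
  have hbk : 0 < b ^ k := Real.rpow_pos_of_pos hb _
  rw [← tendsto_add_atTop_iff_nat 1]
  have hlim : Tendsto (fun t : ℕ => ((1 - α) * b ^ k * b / (α * β)) * (b / a) ^ t) atTop atTop :=
    (tendsto_pow_atTop_atTop_of_one_lt ((one_lt_div ha).2 hab)).const_mul_atTop (by positivity)
  refine tendsto_atTop_mono (fun t => ?_) hlim
  rw [hR (t + 1) (by omega), Nat.add_sub_cancel, hw (t + 1), hr (t + 1), hw t]
  have hS : 0 < α * a ^ t + (1 - α) * b ^ t := by positivity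
  have hS1 : 0 < α * a ^ (t + 1) + (1 - α) * b ^ (t + 1) := by positivity
  have hle : α * a ^ (t + 1) + (1 - α) * b ^ (t + 1) ≤ b * (α * a ^ t + (1 - α) * b ^ t) := by
    have h : α * a ^ t * a ≤ α * a ^ t * b := by gcongr
    rw [pow_succ, pow_succ]
    linarith
  have hmain := Real.rpow_le_rpow_of_nonpos hS1 hle hk
  rw [Real.mul_rpow hb.le hS.le] at hmain
  have hP : 0 < (α * a ^ t + (1 - α) * b ^ t) ^ k := Real.rpow_pos_of_pos hS _
  have hQ : 0 < (α * a ^ (t + 1) + (1 - α) * b ^ (t + 1)) ^ k := Real.rpow_pos_of_pos hS1 _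
  generalize (α * a ^ t + (1 - α) * b ^ t) ^ k = P at *
  generalize (α * a ^ (t + 1) + (1 - α) * b ^ (t + 1)) ^ k = Q at *
  rw [le_div_iff₀ (by positivity)]
  have e : (1 - α) * b ^ k * b / (α * β) * (b / a) ^ t * (β * (α * P * a ^ t))
      = (1 - α) * (b ^ k * P) * b ^ (t + 1) := by
    rw [div_pow]
    field_simp
    ring
  rw [e]
  have h1 : (1 - α) * (b ^ k * P) * b ^ (t + 1) ≤ (1 - α) * Q * b ^ (t + 1) := by gcongr
  have h2 : 0 ≤ β * (α * Q * a ^ (t + 1)) := by positivity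
  linarith
end

section
/- Let α ∈ (0,1) and A_1, A_2 > 0. For H, X > 0, define the aggregate production function F(H,X) as the maximum of A_1 H_1^α X_1^{1−α} + A_2 H_2 over all H_1, H_2, X_1, X_2 ≥ 0 with H_1 + H_2 = H and X_1 + X_2 = X (interpreting A_1 H_1^α X_1^{1−α} as 0 when H_1 = 0 or X_1 = 0). Then F(H,X) = A_1 H^α X^{1−α} if α A_1/A_2 ≥ (H/X)^{1−α}, and F(H,X) = A_2 H + (1−α) α^{α/(1−α)} (A_1/A_2^α)^{1/(1−α)} X if α A_1/A_2 < (H/X)^{1−α}. -/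
theorem tangent_aux (α k h x : ℝ) (h0 : 0 < α) (h1 : α < 1) (hk : 0 < k) (hh : 0 ≤ h) (hx : 0 ≤ x) :
    h ^ α * x ^ (1 - α) ≤ α * ((k ^ (1 - α))⁻¹ * h) + (1 - α) * (k ^ α * x) := by
  have hq : 0 < k ^ (1 - α) := Real.rpow_pos_of_pos hk _
  have hp : 0 < k ^ α := Real.rpow_pos_of_pos hk _
  have key := Real.geom_mean_le_arith_mean2_weighted h0.le (by linarith : 0 ≤ 1 - α)
    (by positivity : 0 ≤ (k ^ (1 - α))⁻¹ * h) (by positivity : 0 ≤ k ^ α * x) (by ring)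
  refine le_trans (le_of_eq ?_) key
  rw [Real.mul_rpow (by positivity) hh, Real.mul_rpow hp.le hx, Real.inv_rpow hq.le,
    ← Real.rpow_mul hk.le, ← Real.rpow_mul hk.le, mul_comm (1 - α) α]
  have : 0 < k ^ (α * (1 - α)) := Real.rpow_pos_of_pos hk _
  field_simp

theorem const_aux (α A1 A2 : ℝ) (h0 : 0 < α) (h1 : α < 1) (hA1 : 0 < A1) (hA2 : 0 < A2) :
    A1 * ((α * A1 / A2) ^ (1 / (1 - α))) ^ α
      = α ^ (α / (1 - α)) * (A1 / A2 ^ α) ^ (1 / (1 - α)) := by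
  have h2 : 0 < 1 - α := by linarith
  have e : A1 ^ (1 / (1 - α)) = A1 * A1 ^ (α / (1 - α)) := by
    rw [← Real.rpow_one_add' hA1.le (by positivity)]
    congr 1
    field_simp
    ring
  rw [← Real.rpow_mul (by positivity), Real.div_rpow (by positivity) hA2.le,
    Real.mul_rpow h0.le hA1.le, Real.div_rpow hA1.le (by positivity), ← Real.rpow_mul hA2.le, e,
    show 1 / (1 - α) * α = α / (1 - α) by ring, show α * (1 / (1 - α)) = α / (1 - α) by ring]
  ring

/-- Aggregation of a Cobb-Douglas land-intensive sector `A₁ H₁^α X₁^{1-α}` and a linear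
labor-only sector `A₂ H₂`: the maximal aggregate output over all allocations of total
labor `H` and total land `X` is `A₁ H^α X^{1-α}` when `α A₁/A₂ ≥ (H/X)^{1-α}`, and
`A₂ H + (1-α) α^{α/(1-α)} (A₁/A₂^α)^{1/(1-α)} X` otherwise. -/
theorem two_sector_aggregate_production
    (α A1 A2 : ℝ) (hα : α ∈ Set.Ioo (0 : ℝ) 1) (hA1 : 0 < A1) (hA2 : 0 < A2)
    (H X : ℝ) (hH : 0 < H) (hX : 0 < X) :
    (α * A1 / A2 ≥ (H / X) ^ (1 - α) →
      IsGreatest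
        {y : ℝ | ∃ H1 H2 X1 X2 : ℝ, 0 ≤ H1 ∧ 0 ≤ H2 ∧ 0 ≤ X1 ∧ 0 ≤ X2 ∧
          H1 + H2 = H ∧ X1 + X2 = X ∧ y = A1 * H1 ^ α * X1 ^ (1 - α) + A2 * H2}
        (A1 * H ^ α * X ^ (1 - α))) ∧
    (α * A1 / A2 < (H / X) ^ (1 - α) →
      IsGreatest
        {y : ℝ | ∃ H1 H2 X1 X2 : ℝ, 0 ≤ H1 ∧ 0 ≤ H2 ∧ 0 ≤ X1 ∧ 0 ≤ X2 ∧
          H1 + H2 = H ∧ X1 + X2 = X ∧ y = A1 * H1 ^ α * X1 ^ (1 - α) + A2 * H2}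
        (A2 * H + (1 - α) * α ^ (α / (1 - α)) * (A1 / A2 ^ α) ^ (1 / (1 - α)) * X)) := by
  obtain ⟨h0, h1⟩ := hα
  have h2 : 0 < 1 - α := by linarith
  constructor
  · intro hc
    refine ⟨⟨H, 0, X, 0, hH.le, le_rfl, hX.le, le_rfl, by ring, by ring, by ring⟩, ?_⟩
    rintro y ⟨H1, H2, X1, X2, a1, a2, b1, b2, hs, ht, rfl⟩
    have hk : 0 < H / X := by positivity
    have t := tangent_aux α (H / X) H1 X1 h0 h1 hk a1 b1
    have e1 : H ^ α * X ^ (1 - α) = (H / X) ^ α * X := by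
      rw [Real.div_rpow hH.le hX.le, Real.rpow_sub hX, Real.rpow_one]
      ring
    have hpq : (H / X) ^ α * (H / X) ^ (1 - α) = H / X := by
      rw [← Real.rpow_add hk]; simp
    have hp : 0 < (H / X) ^ α := Real.rpow_pos_of_pos hk _
    have hq : 0 < (H / X) ^ (1 - α) := Real.rpow_pos_of_pos hk _
    rw [mul_assoc, mul_assoc, e1]
    generalize (H / X) ^ α = p at *
    generalize (H / X) ^ (1 - α) = q at *
    have hHe : q⁻¹ * H = p * X := by
      field_simp at hpq ⊢
      linarith
    have hs2 : A2 ≤ A1 * α * q⁻¹ := by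
      rw [ge_iff_le, le_div_iff₀ hA2] at hc
      rw [← div_eq_mul_inv, le_div_iff₀ hq]
      linarith
    have hX1 : p * X1 ≤ p * X := mul_le_mul_of_nonneg_left (by linarith) hp.le
    have hX2 := mul_le_mul_of_nonneg_left hX1 (mul_pos hA1 h2).le
    have t2 := mul_le_mul_of_nonneg_left t hA1.le
    have t3 := mul_le_mul_of_nonneg_right hs2 a2
    have e4 : A1 * α * (q⁻¹ * H1) + A1 * α * q⁻¹ * H2 = A1 * α * (p * X) := by
      rw [← hHe, ← hs]; ring
    linarith
  · intro hc
    have hc0 : 0 < α * A1 / A2 := by positivity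
    have hcst := const_aux α A1 A2 h0 h1 hA1 hA2
    have hk : 0 < (α * A1 / A2) ^ (1 / (1 - α)) := Real.rpow_pos_of_pos hc0 _
    have hq : ((α * A1 / A2) ^ (1 / (1 - α))) ^ (1 - α) = α * A1 / A2 := by
      rw [← Real.rpow_mul hc0.le, one_div_mul_cancel h2.ne', Real.rpow_one]
    rw [mul_assoc (1 - α), ← hcst]
    generalize (α * A1 / A2) ^ (1 / (1 - α)) = k at *
    have hp : 0 < k ^ α := Real.rpow_pos_of_pos hk _
    have hpq : k ^ α * k ^ (1 - α) = k := by
      rw [← Real.rpow_add hk]; simp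
    have hkk : k < H / X := by
      rw [← hq] at hc
      exact (Real.rpow_lt_rpow_iff hk.le (by positivity) h2).1 hc
    constructor
    · rw [lt_div_iff₀ hX] at hkk
      refine ⟨k * X, H - k * X, X, 0, by positivity, by linarith, hX.le, le_rfl, by ring, by ring, ?_⟩
      have e1 : (k * X) ^ α * X ^ (1 - α) = k ^ α * X := by
        rw [Real.mul_rpow hk.le hX.le, mul_assoc, ← Real.rpow_add hX]; simp
      rw [mul_assoc A1 _ (X ^ _), e1]
      have : A2 * k = A1 * α * k ^ α := by
        rw [hq] at hpq
        nth_rewrite 1 [← hpq]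
        field_simp
      linear_combination X * this
    · rintro y ⟨H1, H2, X1, X2, a1, a2, b1, b2, hs, ht, rfl⟩
      have t := tangent_aux α k H1 X1 h0 h1 hk a1 b1
      rw [hq] at t
      have t2 := mul_le_mul_of_nonneg_left t hA1.le
      have hX1 : k ^ α * X1 ≤ k ^ α * X := mul_le_mul_of_nonneg_left (by linarith) hp.le
      have hX2 := mul_le_mul_of_nonneg_left hX1 (mul_pos hA1 h2).le
      have e : A1 * (α * ((α * A1 / A2)⁻¹ * H1)) = A2 * H1 := by field_simp
      rw [mul_add, e] at t2
      rw [← hs]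
      linarith
end

section
/- Let α ∈ (0,1) and A_1, A_2 > 0. Define w = max{α A_1, A_2}, H_1 = min{α A_1/A_2, 1}^{1/(1−α)}, H_2 = 1 − H_1, and r = (1−α) A_1 min{α A_1/A_2, 1}^{α/(1−α)}. Then (w, r, H_1, H_2) is the unique tuple with H_1 ∈ (0,1], H_2 = 1 − H_1 ≥ 0, satisfying the profit-maximization first-order conditions w = α A_1 H_1^{α−1}, r = (1−α) A_1 H_1^α, and w ≥ A_2 with equality whenever H_2 > 0. -/
/-- In the two-sector OLG model with unit land and labor supply, the tuple
`w = max {α A₁, A₂}`, `H₁ = min {α A₁/A₂, 1}^{1/(1-α)}`, `H₂ = 1 - H₁`,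
`r = (1-α) A₁ min {α A₁/A₂, 1}^{α/(1-α)}` is the unique tuple with `H₁ ∈ (0,1]`,
`H₂ = 1 - H₁ ≥ 0` satisfying the profit-maximization first-order conditions
`w = α A₁ H₁^{α-1}`, `r = (1-α) A₁ H₁^α`, and `w ≥ A₂` with equality whenever `H₂ > 0`. -/
theorem two_sector_foc_unique_solution
    (α A1 A2 : ℝ) (hα : α ∈ Set.Ioo (0 : ℝ) 1) (hA1 : 0 < A1) (hA2 : 0 < A2) :
    (let w := max (α * A1) A2
     let H1 := (min (α * A1 / A2) 1) ^ (1 / (1 - α))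
     let H2 := 1 - H1
     let r := (1 - α) * A1 * (min (α * A1 / A2) 1) ^ (α / (1 - α))
     (0 < H1 ∧ H1 ≤ 1) ∧ H2 = 1 - H1 ∧ 0 ≤ H2 ∧
       w = α * A1 * H1 ^ (α - 1) ∧ r = (1 - α) * A1 * H1 ^ α ∧
       A2 ≤ w ∧ (0 < H2 → w = A2)) ∧
    ∀ w r H1 H2 : ℝ,
      ((0 < H1 ∧ H1 ≤ 1) ∧ H2 = 1 - H1 ∧ 0 ≤ H2 ∧
        w = α * A1 * H1 ^ (α - 1) ∧ r = (1 - α) * A1 * H1 ^ α ∧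
        A2 ≤ w ∧ (0 < H2 → w = A2)) →
      w = max (α * A1) A2 ∧
      H1 = (min (α * A1 / A2) 1) ^ (1 / (1 - α)) ∧
      H2 = 1 - (min (α * A1 / A2) 1) ^ (1 / (1 - α)) ∧
      r = (1 - α) * A1 * (min (α * A1 / A2) 1) ^ (α / (1 - α)) := by
  obtain ⟨h0, h1⟩ := hα
  have hs : 0 < 1 - α := by linarith
  have ha : 0 < α * A1 := mul_pos h0 hA1
  have hm0 : 0 < min (α * A1 / A2) 1 := lt_min (div_pos ha hA2) one_pos
  have hm1 : min (α * A1 / A2) 1 ≤ 1 := min_le_right _ _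
  have hmax : max (α * A1) A2 = α * A1 * (min (α * A1 / A2) 1)⁻¹ := by
    rcases le_total (α * A1) A2 with h | h
    · rw [max_eq_right h, min_eq_left ((div_le_one hA2).2 h)]
      field_simp
    · rw [max_eq_left h, min_eq_right ((one_le_div hA2).2 h)]
      simp
  have hmA : min (α * A1 / A2) 1 < 1 → max (α * A1) A2 = A2 := by
    intro h
    rcases min_lt_iff.1 h with h | h
    · exact max_eq_right ((div_lt_one hA2).1 h).le
    · exact absurd h (lt_irrefl _)
  have hr : ((min (α * A1 / A2) 1) ^ (1 / (1 - α))) ^ α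
      = (min (α * A1 / A2) 1) ^ (α / (1 - α)) := by
    rw [← Real.rpow_mul hm0.le]
    congr 1
    ring
  have hw : ((min (α * A1 / A2) 1) ^ (1 / (1 - α))) ^ (α - 1)
      = (min (α * A1 / A2) 1)⁻¹ := by
    rw [← Real.rpow_mul hm0.le, ← Real.rpow_neg_one]
    congr 1
    field_simp
    ring
  constructor
  · intro w H1 H2 r
    have hH1 : H1 ≤ 1 := Real.rpow_le_one hm0.le hm1 (by positivity)
    refine ⟨⟨Real.rpow_pos_of_pos hm0 _, hH1⟩, rfl, sub_nonneg.2 hH1, ?_, ?_,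
      le_max_right _ _, ?_⟩
    · simp only [w, H1]
      rw [hw, hmax]
    · simp only [r, H1]
      rw [hr]
    · intro h
      apply hmA
      refine lt_of_le_of_ne hm1 fun e => ?_
      simp only [H2, H1, e, Real.one_rpow, sub_self, lt_irrefl] at h
  · rintro w r H1 H2 ⟨⟨p0, p1⟩, e2, -, ew, er, hle, himp⟩
    have hp0 : 0 < H1 ^ (1 - α) := Real.rpow_pos_of_pos p0 _
    have hp1 : H1 ^ (1 - α) ≤ 1 := Real.rpow_le_one p0.le p1 hs.le
    have hinv : H1 ^ (α - 1) = (H1 ^ (1 - α))⁻¹ := by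
      rw [← Real.rpow_neg p0.le]
      congr 1
      ring
    have key : H1 ^ (1 - α) = min (α * A1 / A2) 1 := by
      rcases p1.lt_or_eq with h | h
      · have hwA := himp (by linarith)
        have : H1 ^ (1 - α) = α * A1 / A2 := by
          rw [← hwA, ew, hinv]
          field_simp
        rw [← this, min_eq_left hp1]
      · subst h
        rw [Real.one_rpow, mul_one] at ew
        rw [Real.one_rpow, min_eq_right ((one_le_div hA2).2 (ew ▸ hle))]
    have hH : H1 = (min (α * A1 / A2) 1) ^ (1 / (1 - α)) := by
      rw [← key, ← Real.rpow_mul p0.le, mul_one_div_cancel hs.ne', Real.rpow_one]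
    refine ⟨?_, hH, ?_, ?_⟩
    · rw [hmax, ew, hinv, key]
    · rw [e2, ← hH]
    · rw [er, ← hr, ← hH]
end

section
/- Let E: ℝ²_{>0} → ℝ_{>0} be a twice continuously differentiable neoclassical production function with E_{HX} > 0, let α ∈ (0,1), and define F(H,X) = H^α E(H,X)^{1−α}. Then F is a neoclassical production function and its elasticity of substitution satisfies, at every (H,X) ∈ ℝ²_{>0}, σ_F(H,X) − 1 = (σ_E(H,X) − 1) / ( 1 + α · (X E_X(H,X))/(H E_H(H,X)) · σ_E(H,X) ). In particular, σ_E(H,X) > 1 implies σ_F(H,X) > 1. -/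
noncomputable section

theorem aux_amgm {α a b A B : ℝ} (h0 : 0 < α) (h1 : α < 1) (ha : 0 ≤ a) (hb : 0 ≤ b)
    (hA : 0 < A) (hB : 0 < B) :
    a ^ α * b ^ (1 - α) ≤ A ^ α * B ^ (1 - α) * (α * (a / A) + (1 - α) * (b / B)) := by
  have h := Real.geom_mean_le_arith_mean2_weighted h0.le (sub_pos.2 h1).le
    (div_nonneg ha hA.le) (div_nonneg hb hB.le) (by ring)
  have hA' := Real.rpow_pos_of_pos hA α
  have hB' := Real.rpow_pos_of_pos hB (1 - α)
  rw [Real.div_rpow ha hA.le, Real.div_rpow hb hB.le] at h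
  calc a ^ α * b ^ (1 - α)
      = A ^ α * B ^ (1 - α) * (a ^ α / A ^ α * (b ^ (1 - α) / B ^ (1 - α))) := by
        field_simp
    _ ≤ _ := by gcongr

theorem aux_scale {α t x y : ℝ} (h0 : 0 < α) (h1 : α < 1) (ht : 0 ≤ t) (hx : 0 ≤ x)
    (hy : 0 ≤ y) : (t * x) ^ α * (t * y) ^ (1 - α) = t * (x ^ α * y ^ (1 - α)) := by
  rw [Real.mul_rpow ht hx, Real.mul_rpow ht hy]
  have : t = t ^ α * t ^ (1 - α) := by
    rw [← Real.rpow_add_of_nonneg ht h0.le (sub_pos.2 h1).le]; simp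
  calc _ = (t ^ α * t ^ (1 - α)) * (x ^ α * y ^ (1 - α)) := by ring
    _ = _ := by rw [← this]

theorem aux_open : IsOpen {p : ℝ × ℝ | 0 < p.1 ∧ 0 < p.2} :=
  (isOpen_lt continuous_const continuous_fst).inter (isOpen_lt continuous_const continuous_snd)

theorem aux_partials {E : ℝ → ℝ → ℝ} (hE : Neoclassical E) {H X : ℝ} (hH : 0 < H) (hX : 0 < X) :
    HasDerivAt (fun h => E h X) (dH E H X) H ∧ HasDerivAt (fun x => E H x) (dX E H X) X ∧
    H * dH E H X + X * dX E H X = E H X := by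
  have hd : DifferentiableAt ℝ (fun p : ℝ × ℝ => E p.1 p.2) (H, X) :=
    (hE.contDiff.differentiableOn (by norm_num)).differentiableAt
      (aux_open.mem_nhds ⟨hH, hX⟩)
  have hf := hd.hasFDerivAt
  set L := fderiv ℝ (fun p : ℝ × ℝ => E p.1 p.2) (H, X) with hL
  have e1 : HasDerivAt (fun h => E h X) (L (1, 0)) H :=
    HasFDerivAt.comp_hasDerivAt (f := fun h : ℝ => (h, X)) H hf ((hasDerivAt_id H).prodMk (hasDerivAt_const H X))
  have e2 : HasDerivAt (fun x => E H x) (L (0, 1)) X :=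
    HasFDerivAt.comp_hasDerivAt (f := fun x : ℝ => (H, x)) X hf ((hasDerivAt_const X H).prodMk (hasDerivAt_id X))
  have d1 : dH E H X = L (1, 0) := e1.deriv
  have d2 : dX E H X = L (0, 1) := e2.deriv
  refine ⟨d1 ▸ e1, d2 ▸ e2, ?_⟩
  have g : HasDerivAt (fun l : ℝ => (l * H, l * X)) (H, X) 1 := by
    have := ((hasDerivAt_id (1:ℝ)).mul_const H).prodMk ((hasDerivAt_id (1:ℝ)).mul_const X)
    simpa using this
  have hf' : HasFDerivAt (fun p : ℝ × ℝ => E p.1 p.2) L ((1:ℝ) * H, (1:ℝ) * X) := by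
    simpa using hf
  have e3 : HasDerivAt (fun l : ℝ => E (l * H) (l * X)) (L (H, X)) 1 :=
    HasFDerivAt.comp_hasDerivAt (f := fun l : ℝ => (l * H, l * X)) 1 hf' g
  have e4 : HasDerivAt (fun l : ℝ => E (l * H) (l * X)) (E H X) 1 := by
    have : HasDerivAt (fun l : ℝ => l * E H X) (E H X) 1 := by
      simpa using (hasDerivAt_id (1:ℝ)).mul_const (E H X)
    refine this.congr_of_eventuallyEq ?_
    filter_upwards [lt_mem_nhds (zero_lt_one (α := ℝ))] with l hl
    exact hE.homog hl hH hX
  rw [← e3.unique e4, d1, d2]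
  have : ((H, X) : ℝ × ℝ) = H • ((1:ℝ), (0:ℝ)) + X • ((0:ℝ), (1:ℝ)) := by simp
  rw [this, map_add, map_smul, map_smul]; simp

theorem aux_F {E : ℝ → ℝ → ℝ} (hE : Neoclassical E) {α : ℝ} {H X : ℝ} (hH : 0 < H) (hX : 0 < X) :
    HasDerivAt (fun h => h ^ α * E h X ^ (1 - α))
      (H ^ α * E H X ^ (1 - α) * (α / H + (1 - α) * dH E H X / E H X)) H ∧
    HasDerivAt (fun x => H ^ α * E H x ^ (1 - α))
      (H ^ α * E H X ^ (1 - α) * ((1 - α) * dX E H X / E H X)) X := by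
  obtain ⟨h1, h2, -⟩ := aux_partials hE hH hX
  have hp := hE.pos hH hX
  have r1 := Real.rpow_sub_one hH.ne' α
  have r2 := Real.rpow_sub_one hp.ne' (1 - α)
  constructor
  · have := ((hasDerivAt_id H).rpow_const (p := α) (Or.inl hH.ne')).mul
      (h1.rpow_const (p := 1 - α) (Or.inl hp.ne'))
    refine this.congr_deriv ?_
    simp only [id, r1, r2]
    field_simp
  · have := (h2.rpow_const (p := 1 - α) (Or.inl hp.ne')).const_mul (H ^ α)
    refine this.congr_deriv ?_
    simp only [r2]
    field_simp

theorem aux_alg {α H X e a b c f s S : ℝ} (h0 : 0 < α) (h1 : α < 1) (hH : 0 < H) (hX : 0 < X)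
    (he : 0 < e) (ha : 0 < a) (hb : 0 < b) (hc : 0 < c) (hf : 0 < f)
    (eul : H * a + X * b = e) (hs : s = a * b / (e * c))
    (hS : S = (f * (α / H + (1 - α) * a / e)) * (f * ((1 - α) * b / e)) /
      (f * ((f * ((1 - α) * b / e)) * (α / H + (1 - α) * a / e) +
        f * ((1 - α) * ((c * e - a * b) / e ^ 2))))) :
    S - 1 = (s - 1) / (1 + α * (X * b) / (H * a) * s) ∧ (1 < s → 1 < S) := by
  have hs0 : 0 < s := by rw [hs]; positivity
  have h1' : 0 < 1 - α := by linarith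
  have hk : 0 < 1 + α * (X * b) / (H * a) * s := by positivity
  have key : S - 1 = (s - 1) / (1 + α * (X * b) / (H * a) * s) := by
    have hD : f * ((f * ((1 - α) * b / e)) * (α / H + (1 - α) * a / e) +
        f * ((1 - α) * ((c * e - a * b) / e ^ 2))) =
        f ^ 2 * (1 - α) * (c * H * e + α * X * b ^ 2) / (H * e ^ 2) := by
      field_simp
      rw [← eul]; ring
    have hN : (f * (α / H + (1 - α) * a / e)) * (f * ((1 - α) * b / e)) =
        f ^ 2 * (1 - α) * (b * (H * a + α * X * b)) / (H * e ^ 2) := by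
      field_simp
      rw [← eul]; ring
    have q1 : 0 < c * H * e + α * X * b ^ 2 := by positivity
    have hS' : S = b * (H * a + α * X * b) / (c * H * e + α * X * b ^ 2) := by
      rw [hS, hD, hN]; field_simp
    have hk' : 1 + α * (X * b) / (H * a) * s = (c * H * e + α * X * b ^ 2) / (H * e * c) := by
      rw [hs]; field_simp
    rw [hk', hS', hs]
    field_simp
    rw [← eul]; ring
  refine ⟨key, fun h => ?_⟩
  have : 0 < S - 1 := by rw [key]; exact div_pos (by linarith) hk
  linarith

/-- For `F(H,X) = H^α E(H,X)^{1-α}` built from a neoclassical `E`, `F` is neoclassical and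
`σ_F - 1 = (σ_E - 1)/(1 + α (X E_X)/(H E_H) σ_E)`; in particular `σ_E > 1` implies
`σ_F > 1`. -/
theorem elasticity_of_substitution_composite
    (E : ℝ → ℝ → ℝ) (hE : Neoclassical E)
    (hE2 : ContDiffOn ℝ 2 (fun p : ℝ × ℝ => E p.1 p.2) {p : ℝ × ℝ | 0 < p.1 ∧ 0 < p.2})
    (hEHX : ∀ ⦃H X : ℝ⦄, 0 < H → 0 < X → 0 < dHX E H X)
    (α : ℝ) (hα : α ∈ Set.Ioo (0 : ℝ) 1)
    (F : ℝ → ℝ → ℝ) (hF : F = fun H X => H ^ α * E H X ^ (1 - α)) :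
    Neoclassical F ∧
    ∀ H X : ℝ, 0 < H → 0 < X →
      sigmaF F H X - 1 =
        (sigmaF E H X - 1) / (1 + α * (X * dX E H X) / (H * dH E H X) * sigmaF E H X) ∧
      (1 < sigmaF E H X → 1 < sigmaF F H X) := by
  obtain ⟨h0, h1⟩ := hα
  have h1' : 0 < 1 - α := by linarith
  have FH : ∀ {H X : ℝ}, 0 < H → 0 < X →
      dH F H X = F H X * (α / H + (1 - α) * dH E H X / E H X) := by
    intro H X hH hX
    rw [hF]; exact (aux_F hE hH hX).1.deriv
  have FX : ∀ {H X : ℝ}, 0 < H → 0 < X →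
      HasDerivAt (fun x => F H x) (F H X * ((1 - α) * dX E H X / E H X)) X := by
    intro H X hH hX
    rw [hF]; exact (aux_F hE hH hX).2
  have Fpos : ∀ ⦃H X : ℝ⦄, 0 < H → 0 < X → 0 < F H X := by
    intro H X hH hX
    have := hE.pos hH hX
    rw [hF]; positivity
  constructor
  · refine ⟨Fpos, ?_, ?_, ?_, ?_, ?_⟩
    · intro l H X hl hH hX
      simp only [hF]
      rw [hE.homog hl hH hX]
      exact aux_scale h0 h1 hl.le hH.le (hE.pos hH hX).le
    · refine ⟨hE.concave.1, ?_⟩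
      rintro p hp q hq t r ht hr htr
      have hm := hE.concave.1 hp hq ht hr htr
      have hc := hE.concave.2 hp hq ht hr htr
      have ep := hE.pos hp.1 hp.2
      have eq' := hE.pos hq.1 hq.2
      obtain ⟨p1, p2⟩ := p
      obtain ⟨q1, q2⟩ := q
      simp only [hF, smul_eq_mul, Prod.smul_mk, Prod.mk_add_mk, Set.mem_setOf_eq] at *
      set A := t * p1 + r * q1
      set e := E A (t * p2 + r * q2)
      have hB : 0 < t * E p1 p2 + r * E q1 q2 := by
        rcases ht.eq_or_lt with h | h
        · have : r = 1 := by linarith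
          subst this; rw [← h]; linarith
        · positivity
      have m1 := aux_amgm h0 h1 (mul_nonneg ht hp.1.le) (mul_nonneg ht ep.le) hm.1 hB
      have m2 := aux_amgm h0 h1 (mul_nonneg hr hq.1.le) (mul_nonneg hr eq'.le) hm.1 hB
      rw [aux_scale h0 h1 ht hp.1.le ep.le] at m1
      rw [aux_scale h0 h1 hr hq.1.le eq'.le] at m2
      set B := t * E p1 p2 + r * E q1 q2 with hBdef
      have hs : (α * (t * p1 / A) + (1 - α) * (t * E p1 p2 / B)) +
          (α * (r * q1 / A) + (1 - α) * (r * E q1 q2 / B)) = 1 := by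
        have a1 : t * p1 / A + r * q1 / A = 1 := by
          rw [← add_div]; exact div_self hm.1.ne'
        have a2 : t * E p1 p2 / B + r * E q1 q2 / B = 1 := by
          rw [← add_div]; exact div_self hB.ne'
        linear_combination α * a1 + (1 - α) * a2
      have m3 : A ^ α * B ^ (1 - α) ≤ A ^ α * e ^ (1 - α) := by
        have := hm.1
        gcongr
      refine le_trans ?_ m3
      calc _ ≤ _ := add_le_add m1 m2
        _ = A ^ α * B ^ (1 - α) := by rw [← mul_add, hs, mul_one]
    · rw [hF]
      refine ContDiffOn.mul ?_ ?_
      · exact contDiffOn_fst.rpow_const_of_ne fun p hp => hp.1.ne'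
      · exact hE.contDiff.rpow_const_of_ne fun p hp => (hE.pos hp.1 hp.2).ne'
    · intro H X hH hX
      rw [FH hH hX]
      have := hE.pos hH hX
      have := hE.dH_pos hH hX
      have := Fpos hH hX
      positivity
    · intro H X hH hX
      have e : dX F H X = _ := (FX hH hX).deriv
      rw [e]
      have := hE.pos hH hX
      have := hE.dX_pos hH hX
      have := Fpos hH hX
      positivity
  · intro H X hH hX
    have e : dX F H X = _ := (FX hH hX).deriv
    obtain ⟨-, p2, p3⟩ := aux_partials hE hH hX
    have hp := hE.pos hH hX
    have hc := hEHX hH hX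
    have dd : HasDerivAt (fun x => dH E H x) (dHX E H X) X :=
      (differentiableAt_of_deriv_ne_zero hc.ne').hasDerivAt
    have e2 : dHX F H X = (F H X * ((1 - α) * dX E H X / E H X)) *
        (α / H + (1 - α) * dH E H X / E H X) +
        F H X * ((1 - α) * ((dHX E H X * E H X - dH E H X * dX E H X) / E H X ^ 2)) := by
      have q := (FX hH hX).mul
        (((dd.const_mul (1 - α)).div p2 hp.ne').const_add (α / H))
      refine HasDerivAt.deriv ((q.congr_of_eventuallyEq ?_).congr_deriv ?_)
      · filter_upwards [lt_mem_nhds hX] with x hx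
        exact FH hH hx
      · simp only [Pi.div_apply]
        ring
    refine aux_alg (s := sigmaF E H X) (S := sigmaF F H X) h0 h1 hH hX hp (hE.dH_pos hH hX)
      (hE.dX_pos hH hX) hc (Fpos hH hX) p3 rfl ?_
    rw [sigmaF, FH hH hX, e, e2]
end
end

section
/- Let a ∈ (0,1), σ_E > 1, ρ_E = 1/σ_E ∈ (0,1), and let E(H,X) = (a H^{1−ρ_E} + (1−a) X^{1−ρ_E})^{1/(1−ρ_E)} be the CES production function. Let α ∈ (0,1) and F(H,X) = H^α E(H,X)^{1−α}. Then (X E_X(H,1))/(H E_H(H,1)) → 0 as H → ∞, and consequently the elasticity of substitution of F satisfies lim_{H→∞} σ_F(H,1) = σ_E > 1. -/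
open Filter Topology

noncomputable section

lemma aux_h (a b p q h x : ℝ) (ha : 0 < a) (hb : 0 < b) (hh : 0 < h) (hx : 0 < x) :
    HasDerivAt (fun h : ℝ => (a * h ^ p + b * x ^ p) ^ q)
      (a * (p * h ^ (p - 1)) * q * (a * h ^ p + b * x ^ p) ^ (q - 1)) h := by
  have hS : 0 < a * h ^ p + b * x ^ p := by positivity
  have h1 : HasDerivAt (fun h : ℝ => a * h ^ p + b * x ^ p) (a * (p * h ^ (p - 1))) h :=
    ((Real.hasDerivAt_rpow_const (Or.inl hh.ne')).const_mul a).add_const _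
  exact h1.rpow_const (Or.inl hS.ne')

lemma aux_x (a b p q h x : ℝ) (ha : 0 < a) (hb : 0 < b) (hh : 0 < h) (hx : 0 < x) :
    HasDerivAt (fun x : ℝ => (a * h ^ p + b * x ^ p) ^ q)
      (b * (p * x ^ (p - 1)) * q * (a * h ^ p + b * x ^ p) ^ (q - 1)) x := by
  have hS : 0 < a * h ^ p + b * x ^ p := by positivity
  have h1 : HasDerivAt (fun x : ℝ => a * h ^ p + b * x ^ p) (b * (p * x ^ (p - 1))) x :=
    ((Real.hasDerivAt_rpow_const (Or.inl hx.ne')).const_mul b).const_add _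
  exact h1.rpow_const (Or.inl hS.ne')

/-- If `E` is CES with elasticity of substitution `σ_E > 1` and
`F(H,X) = H^α E(H,X)^{1-α}`, then `(X E_X)/(H E_H) → 0` as `H → ∞` (at `X = 1`) and
consequently `σ_F(H,1) → σ_E` as `H → ∞`. -/
theorem composite_elasticity_limit
    (a σE ρE α : ℝ) (ha : a ∈ Set.Ioo (0 : ℝ) 1) (hσE : 1 < σE) (hρE : ρE = 1 / σE)
    (hα : α ∈ Set.Ioo (0 : ℝ) 1)
    (E F : ℝ → ℝ → ℝ)
    (hE : E = fun H X => (a * H ^ (1 - ρE) + (1 - a) * X ^ (1 - ρE)) ^ (1 / (1 - ρE)))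
    (hF : F = fun H X => H ^ α * E H X ^ (1 - α)) :
    Tendsto (fun H : ℝ => 1 * dX E H 1 / (H * dH E H 1)) atTop (𝓝 0) ∧
    Tendsto (fun H : ℝ => sigmaF F H 1) atTop (𝓝 σE) := by
  obtain ⟨ha0, ha1⟩ := ha
  obtain ⟨hα0, hα1⟩ := hα
  have hρ0 : 0 < ρE := by rw [hρE]; positivity
  have hρ1 : ρE < 1 := by rw [hρE, div_lt_one (by linarith)]; exact hσE
  have hσ : σE = 1 / ρE := by rw [hρE]; simp
  obtain ⟨p, hp⟩ : ∃ p, p = 1 - ρE := ⟨_, rfl⟩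
  obtain ⟨b, hb⟩ : ∃ b, b = 1 - a := ⟨_, rfl⟩
  rw [← hp, ← hb] at hE
  have hp0 : 0 < p := by linarith
  have hb0 : 0 < b := by linarith
  have hu : Tendsto (fun H : ℝ => a * H ^ p) atTop atTop :=
    (tendsto_rpow_atTop hp0).const_mul_atTop ha0
  obtain ⟨q, hq⟩ : ∃ q, q = 1 / p * (1 - α) := ⟨_, rfl⟩
  have hqp : q * p = 1 - α := by rw [hq]; field_simp
  have hq0 : 0 < q := by rw [hq]; have : 0 < 1 - α := by linarith
                         positivity
  have hF' : ∀ h x : ℝ, 0 < h → 0 < x → F h x = h ^ α * (a * h ^ p + b * x ^ p) ^ q := by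
    intro h x hh hx
    rw [hF, hE]
    simp only
    rw [← Real.rpow_mul (by positivity), ← hq]
  have hFH : ∀ h x : ℝ, 0 < h → 0 < x → dH F h x =
      α * h ^ (α - 1) * (a * h ^ p + b * x ^ p) ^ q +
      h ^ α * (a * (p * h ^ (p - 1)) * q * (a * h ^ p + b * x ^ p) ^ (q - 1)) := by
    intro h x hh hx
    have h1 := (Real.hasDerivAt_rpow_const (p := α) (Or.inl hh.ne')).mul
      (aux_h a b p q h x ha0 hb0 hh hx)
    refine HasDerivAt.deriv (h1.congr_of_eventuallyEq ?_)
    filter_upwards [lt_mem_nhds hh] with y hy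
    exact hF' y x hy hx
  have hFX : ∀ h x : ℝ, 0 < h → 0 < x → dX F h x =
      h ^ α * (b * (p * x ^ (p - 1)) * q * (a * h ^ p + b * x ^ p) ^ (q - 1)) := by
    intro h x hh hx
    have h1 := (aux_x a b p q h x ha0 hb0 hh hx).const_mul (h ^ α)
    refine HasDerivAt.deriv (h1.congr_of_eventuallyEq ?_)
    filter_upwards [lt_mem_nhds hx] with y hy
    exact hF' h y hh hy
  have hFHX : ∀ h x : ℝ, 0 < h → 0 < x → dHX F h x =
      α * h ^ (α - 1) * (b * (p * x ^ (p - 1)) * q * (a * h ^ p + b * x ^ p) ^ (q - 1)) +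
      h ^ α * (a * (p * h ^ (p - 1)) * q *
        (b * (p * x ^ (p - 1)) * (q - 1) * (a * h ^ p + b * x ^ p) ^ (q - 1 - 1))) := by
    intro h x hh hx
    have h1 := ((aux_x a b p q h x ha0 hb0 hh hx).const_mul (α * h ^ (α - 1))).add
      (((aux_x a b p (q - 1) h x ha0 hb0 hh hx).const_mul
        (a * (p * h ^ (p - 1)) * q)).const_mul (h ^ α))
    refine HasDerivAt.deriv (h1.congr_of_eventuallyEq ?_)
    filter_upwards [lt_mem_nhds hx] with y hy
    exact hFH h y hh hy
  constructor
  · have h0 : Tendsto (fun H : ℝ => b / (a * H ^ p)) atTop (𝓝 0) := hu.const_div_atTop b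
    refine h0.congr' ?_
    filter_upwards [eventually_gt_atTop 0] with H hH
    have e1 : dX E H 1 = b * (p * 1 ^ (p - 1)) * (1 / p) * (a * H ^ p + b * 1 ^ p) ^ (1 / p - 1) := by
      rw [hE]; exact (aux_x a b p (1 / p) H 1 ha0 hb0 hH one_pos).deriv
    have e2 : dH E H 1 = a * (p * H ^ (p - 1)) * (1 / p) * (a * H ^ p + b * 1 ^ p) ^ (1 / p - 1) := by
      rw [hE]; exact (aux_h a b p (1 / p) H 1 ha0 hb0 hH one_pos).deriv
    rw [e1, e2, Real.rpow_sub_one hH.ne' p]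
    simp only [Real.one_rpow]
    have hS : 0 < (a * H ^ p + b * 1) ^ (1 / p - 1) := by positivity
    have hHp : 0 < H ^ p := by positivity
    generalize (a * H ^ p + b * 1) ^ (1 / p - 1) = T at *
    field_simp
  · have h0 : Tendsto (fun H : ℝ => (α * b / (a * H ^ p) + 1) / (α * b / (a * H ^ p) + ρE))
        atTop (𝓝 ((0 + 1) / (0 + ρE))) :=
      ((hu.const_div_atTop _).add_const _).div ((hu.const_div_atTop _).add_const _)
        (by simpa using hρ0.ne')
    rw [zero_add, zero_add, ← hσ] at h0
    refine h0.congr' ?_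
    filter_upwards [eventually_gt_atTop 0] with H hH
    unfold sigmaF
    rw [hFH H 1 hH one_pos, hFX H 1 hH one_pos, hFHX H 1 hH one_pos, hF' H 1 hH one_pos]
    have hS : 0 < a * H ^ p + b * 1 ^ p := by positivity
    rw [Real.rpow_sub_one hS.ne' (q - 1), Real.rpow_sub_one hS.ne' q,
      Real.rpow_sub_one hH.ne' p, Real.rpow_sub_one hH.ne' α]
    simp only [Real.one_rpow, mul_one] at *
    have hHp : 0 < H ^ p := by positivity
    have hHα : 0 < H ^ α := by positivity
    have hT : 0 < (a * H ^ p + b) ^ q := by positivity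
    generalize (a * H ^ p + b) ^ q = T at *
    generalize H ^ α = K at *
    obtain ⟨u, hu'⟩ : ∃ u, u = a * H ^ p := ⟨_, rfl⟩
    have hu0 : 0 < u := by rw [hu']; positivity
    obtain ⟨S, hSe⟩ : ∃ S, S = u + b := ⟨_, rfl⟩
    have hS0 : 0 < S := by linarith
    have hD : 0 < α * b + ρE * u := by positivity
    have n1 : α * (K / H) * T + K * (a * (p * (H ^ p / H)) * q * (T / S))
        = K * T / (H * S) * (α * b + u) := by
      have : α * b + u = α * S + q * p * u := by rw [hqp, hSe]; ring
      rw [this, hu']; field_simp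
    have n2 : α * (K / H) * (b * p * q * (T / S)) +
        K * (a * (p * (H ^ p / H)) * q * (b * p * (q - 1) * (T / S / S)))
        = K * T * b * p * q / (H * S * S) * (α * b + ρE * u) := by
      have : α * b + ρE * u = α * S + (q * p - p) * u := by rw [hqp, hSe, hp]; ring
      rw [this, hu']; field_simp
    rw [← hu', ← hSe] at *
    rw [n1, n2]
    field_simp
end
end
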